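/- (Lemma 4) Fix vehicle length l > 0, uncertainty parameter σₒ > 0, positive constants T, L, τ, a speed v > 0 and a capacity requirement ŝ > 0. If the set {η > 0 : s(v,η) ≥ ŝ} is nonempty, then it has a greatest element η^r, and η^r minimizes the collision probability over that set: p(v,η^r) ≤ p(v,η) for every η > 0 with s(v,η) ≥ ŝ. -/

import Mathlib

open MeasureTheory Real Filter Set

/-- The standard Gaussian probability density function. -/
noncomputable def stdGaussianPDF (x : ℝ) : ℝ :=
  (Real.sqrt (2 * Real.pi))⁻¹ * Real.exp (-x ^ 2 / 2)

/-- The standard Gaussian cumulative distribution function Φ. -/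
noncomputable def stdGaussianCDF (x : ℝ) : ℝ :=
  ∫ t in Set.Iic x, stdGaussianPDF t

/-- The per-time-step collision probability p(v,η) = Φ((l − v·η)/(v·σₒ·√η)). -/
noncomputable def collisionProb (l σₒ v η : ℝ) : ℝ :=
  stdGaussianCDF ((l - v * η) / (v * σₒ * Real.sqrt η))

/-- The collision-inclusive capacity s(v,η) = 1/(η + (T·L)/(τ·v)·p(v,η)). -/
noncomputable def cic (l σₒ T L τ v η : ℝ) : ℝ :=
  1 / (η + (T * L) / (τ * v) * collisionProb l σₒ v η)

/- The capacity is at most `1 / η`, so the feasible headways are bounded above by `1 / ŝ`. Since the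
capacity is continuous on `η > 0`, their supremum is again feasible. The collision probability
is `Φ` of `l / (v σₒ √η) - √η / σₒ`, which decreases with the headway `η`, so the greatest feasible
headway minimizes it. -/

open ProbabilityTheory

theorem exists_isGreatest_setOf_le_of_continuousOn {α β : Type*}
    [ConditionallyCompleteLinearOrder α] [TopologicalSpace α] [OrderTopology α]
    [TopologicalSpace β] [Preorder β] [ClosedIciTopology β]
    {f : α → β} {s : Set α} {c : β} (hs : IsUpperSet s) (hf : ContinuousOn f s)
    (hne : {x | x ∈ s ∧ c ≤ f x}.Nonempty) (hbdd : BddAbove {x | x ∈ s ∧ c ≤ f x}) :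
    ∃ r, IsGreatest {x | x ∈ s ∧ c ≤ f x} r := by
  set S := {x | x ∈ s ∧ c ≤ f x}
  have hsup : sSup S ∈ s :=
    let ⟨_, hx⟩ := hne
    hs (le_csSup hbdd hx) hx.1
  have hle : c ≤ f (sSup S) :=
    isClosed_Ici.closure_subset <|
      ((hf _ hsup).mono fun _ hx ↦ hx.1).mem_closure (csSup_mem_closure hne hbdd) fun _ hx ↦ hx.2
  exact ⟨sSup S, ⟨hsup, hle⟩, fun _ hx ↦ le_csSup hbdd hx⟩

theorem continuous_cdf (μ : Measure ℝ) [IsProbabilityMeasure μ] [NullSingletonClass μ] :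
    Continuous (cdf μ) := by
  refine continuous_iff_continuousAt.2 fun x ↦ ?_
  have hjump : ENNReal.ofReal (cdf μ x - Function.leftLim (cdf μ) x) = 0 := by
    rw [← StieltjesFunction.measure_singleton, measure_cdf, measure_singleton]
  rw [(monotone_cdf μ).continuousAt_iff_leftLim_eq_rightLim, StieltjesFunction.rightLim_eq]
  exact ((monotone_cdf μ).leftLim_le le_rfl).antisymm
    (sub_nonpos.1 (ENNReal.ofReal_eq_zero.1 hjump))

theorem stdGaussianPDF_eq_gaussianPDFReal : stdGaussianPDF = gaussianPDFReal 0 1 := by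
  ext x
  simp [stdGaussianPDF, gaussianPDFReal]

theorem stdGaussianCDF_eq_cdf : stdGaussianCDF = cdf (gaussianReal 0 1) := by
  ext x
  have hnonneg : 0 ≤ ∫ t in Iic x, gaussianPDFReal 0 1 t :=
    integral_nonneg fun t ↦ gaussianPDFReal_nonneg 0 1 t
  rw [cdf_eq_real, measureReal_def, gaussianReal_apply_eq_integral 0 one_ne_zero,
    ENNReal.toReal_ofReal hnonneg, ← stdGaussianPDF_eq_gaussianPDFReal, stdGaussianCDF]

theorem monotone_stdGaussianCDF : Monotone stdGaussianCDF :=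
  stdGaussianCDF_eq_cdf ▸ monotone_cdf (gaussianReal 0 1)

theorem continuous_stdGaussianCDF : Continuous stdGaussianCDF := by
  have : NullSingletonClass (gaussianReal 0 1) := nullSingletonClass_gaussianReal one_ne_zero
  exact stdGaussianCDF_eq_cdf ▸ continuous_cdf (gaussianReal 0 1)

theorem collisionProb_nonneg (l σₒ v η : ℝ) : 0 ≤ collisionProb l σₒ v η := by
  rw [collisionProb, stdGaussianCDF_eq_cdf]
  exact cdf_nonneg _ _

section Headway

variable {l σₒ T L τ v η : ℝ}

theorem antitoneOn_collisionProb (hl : 0 ≤ l) (hσ : 0 < σₒ) (hv : 0 < v) :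
    AntitoneOn (collisionProb l σₒ v) (Ioi 0) := by
  have arg_eq {x : ℝ} (hx : 0 < x) :
      (l - v * x) / (v * σₒ * √x) = l / (v * σₒ * √x) - √x / σₒ := by
    have : √x ≠ 0 := (sqrt_pos.2 hx).ne'
    field_simp
    rw [sq_sqrt hx.le]
  intro a (ha : 0 < a) b (hb : 0 < b) hab
  refine monotone_stdGaussianCDF ?_
  rw [arg_eq ha, arg_eq hb]
  gcongr

theorem continuousOn_collisionProb (hσ : σₒ ≠ 0) (hv : v ≠ 0) :
    ContinuousOn (collisionProb l σₒ v) (Ioi 0) :=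
  continuous_stdGaussianCDF.comp_continuousOn <|
    ContinuousOn.div (by fun_prop) (by fun_prop) fun _ hη ↦
      mul_ne_zero (mul_ne_zero hv hσ) (sqrt_pos.2 hη).ne'

theorem le_add_mul_collisionProb {c : ℝ} (hc : 0 ≤ c) :
    η ≤ η + c * collisionProb l σₒ v η :=
  le_add_of_nonneg_right (mul_nonneg hc (collisionProb_nonneg l σₒ v η))

theorem cic_le_one_div (hc : 0 ≤ T * L / (τ * v)) (hη : 0 < η) :
    cic l σₒ T L τ v η ≤ 1 / η :=
  one_div_le_one_div_of_le hη (le_add_mul_collisionProb hc)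

theorem continuousOn_cic (hσ : σₒ ≠ 0) (hv : v ≠ 0) (hc : 0 ≤ T * L / (τ * v)) :
    ContinuousOn (cic l σₒ T L τ v) (Ioi 0) :=
  continuousOn_const.div
    (continuousOn_id.add (continuousOn_const.mul (continuousOn_collisionProb hσ hv)))
    fun _ (hη : 0 < _) ↦ (hη.trans_le (le_add_mul_collisionProb hc)).ne'

theorem bddAbove_setOf_le_cic (hc : 0 ≤ T * L / (τ * v)) {shat : ℝ} (hshat : 0 < shat) :
    BddAbove {η | η ∈ Ioi 0 ∧ shat ≤ cic l σₒ T L τ v η} :=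
  ⟨1 / shat, fun _ ⟨hη, hle⟩ ↦ (le_one_div hshat hη).1 (hle.trans (cic_le_one_div hc hη))⟩

end Headway

/-- Lemma 4: if the feasible set {η > 0 : s(v,η) ≥ ŝ} is
nonempty, it has a greatest element ηr, and ηr minimizes the collision
probability over that set. -/
theorem feasible_set_greatest_minimizes_collisionProb (l σₒ T L τ v shat : ℝ)
    (hl : 0 < l) (hσ : 0 < σₒ) (hT : 0 < T) (hL : 0 < L) (hτ : 0 < τ)
    (hv : 0 < v) (hshat : 0 < shat)
    (hne : {η : ℝ | 0 < η ∧ shat ≤ cic l σₒ T L τ v η}.Nonempty) :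
    ∃ ηr, (0 < ηr ∧ shat ≤ cic l σₒ T L τ v ηr) ∧
      (∀ η, 0 < η → shat ≤ cic l σₒ T L τ v η → η ≤ ηr) ∧
      (∀ η, 0 < η → shat ≤ cic l σₒ T L τ v η →
        collisionProb l σₒ v ηr ≤ collisionProb l σₒ v η) := by
  have hc : 0 ≤ T * L / (τ * v) := by positivity
  obtain ⟨ηr, ⟨hηr, hfeas⟩, hub⟩ :=
    exists_isGreatest_setOf_le_of_continuousOn (isUpperSet_Ioi 0)
      (continuousOn_cic hσ.ne' hv.ne' hc) hne (bddAbove_setOf_le_cic hc hshat)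
  have hgreatest (η : ℝ) (hη : 0 < η) (hle : shat ≤ cic l σₒ T L τ v η) : η ≤ ηr := hub ⟨hη, hle⟩
  exact ⟨ηr, ⟨hηr, hfeas⟩, hgreatest, fun η hη hle ↦
    antitoneOn_collisionProb hl.le hσ hv hη hηr (hgreatest η hη hle)⟩
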